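/- arXiv:2510.20763 — 2 statements merged into one kernel-verified Lean document; each statement's English description precedes it below -/
import Mathlib

section
/- Let 1 ≤ n ≤ N ≤ d, write μ̃_{[n:N]} = (μ̃_k)_{n≤k≤N} ∈ ℝ^{N−n+1}, ã_{[n:N]} = (ã_{kℓ})_{n≤k,ℓ≤N}, and set ν_{[n:N]} = (1−γ)·( r + (1/(2γ))·(μ̃_{[n:N]} − r·1)^⊤(ã_{[n:N]})^{−1}(μ̃_{[n:N]} − r·1) ) where 1 is the all-ones vector in ℝ^{N−n+1}; assume ν_{[n:N]} ≠ β. Define v(t,w) = f(t;ν_{[n:N]})^γ · w^{1−γ}/(1−γ) on [0,T]×(0,∞). Then v(T,w) = w^{1−γ}/(1−γ) for all w > 0, and for every (t,w) ∈ [0,T)×(0,∞): 0 = ∂_t v(t,w) + sup over (π,c) with π ∈ ℝ^d satisfying π_k = 0 for all k ∉ {n,…,N} and c ∈ (0,∞) of [ w·∂_w v(t,w)·(r + π^⊤(μ̃ − r·1_d)) + (w²/2)·∂_{ww}v(t,w)·π^⊤ã π − c·∂_w v(t,w) + e^{−βt}·c^{1−γ}/(1−γ) ]. Moreover this supremum is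 attained at the unique maximizer π* with (π*)_k = (1/γ)·((ã_{[n:N]})^{−1}(μ̃_{[n:N]} − r·1))_{k−n+1} for n ≤ k ≤ N and (π*)_k = 0 otherwise, together with c* = e^{−(β/γ)t}·w/f(t;ν_{[n:N]}). -/
open Matrix

/-- The embedding of `{1,…,N−n+1}` into `{1,…,d}` sending `j` to rank `n−1+j`
(0-based: `j ↦ n−1+j`), used to extract the ranks `n,…,N`. -/
def rankEmb (d n N : ℕ) (hn : 1 ≤ n) (hnN : n ≤ N) (hNd : N ≤ d) :
    Fin (N - n + 1) → Fin d :=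
  fun j => ⟨n - 1 + j.val, by have := j.isLt; omega⟩

lemma rpow_one_sub_div_sub_self_lt {γ x : ℝ} (hγ : 0 < γ) (hγ1 : γ ≠ 1) (hx : 0 < x)
    (hx1 : x ≠ 1) : x ^ (1 - γ) / (1 - γ) - x < γ / (1 - γ) := by
  have hinv : 0 < x⁻¹ := inv_pos.2 hx
  have hs : -1 ≤ x⁻¹ - 1 := by linarith
  have hs' : x⁻¹ - 1 ≠ 0 := by
    rw [sub_ne_zero]
    simpa using hx1
  have hpow : x ^ (1 - γ) = x * (1 + (x⁻¹ - 1)) ^ γ := by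
    rw [add_sub_cancel, Real.inv_rpow hx.le, ← Real.rpow_neg hx.le, sub_eq_add_neg,
      Real.rpow_add hx, Real.rpow_one]
  have hlin : x * (1 + γ * (x⁻¹ - 1)) = x + γ * (1 - x) := by field_simp
  rw [hpow]
  rcases lt_or_gt_of_ne hγ1 with h | h
  · have hB := mul_lt_mul_of_pos_left (rpow_one_add_lt_one_add_mul_self hs hs' hγ h) hx
    rw [sub_lt_iff_lt_add, div_add' _ _ _ (by linarith),
      div_lt_div_iff_of_pos_right (by linarith)]
    linarith
  · have hB := mul_lt_mul_of_pos_left (one_add_mul_self_lt_rpow_one_add hs hs' h) hx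
    rw [sub_lt_iff_lt_add, div_add' _ _ _ (by linarith),
      div_lt_div_right_of_neg (by linarith)]
    linarith

/-- The concave function `c ↦ K c^(1-γ)/(1-γ) - P c` is strictly maximized at its critical
point. -/
lemma power_utility_sub_linear_lt {γ K P c₀ c : ℝ} (hγ : 0 < γ) (hγ1 : γ ≠ 1) (hK : 0 < K)
    (hc₀ : 0 < c₀) (hc : 0 < c) (hP : P = K * c₀ ^ (-γ)) (hne : c ≠ c₀) :
    K * c ^ (1 - γ) / (1 - γ) - c * P < K * c₀ ^ (1 - γ) / (1 - γ) - c₀ * P := by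
  have h1 : 1 - γ ≠ 0 := sub_ne_zero.2 hγ1.symm
  have hx : 0 < c / c₀ := div_pos hc hc₀
  have hx1 : c / c₀ ≠ 1 := by rwa [Ne, div_eq_one_iff_eq hc₀.ne']
  have hpow : c₀ ^ (1 - γ) = c₀ * c₀ ^ (-γ) := by
    rw [sub_eq_add_neg, Real.rpow_add hc₀, Real.rpow_one]
  have hc_pow : c ^ (1 - γ) = (c / c₀) ^ (1 - γ) * (c₀ * c₀ ^ (-γ)) := by
    rw [← hpow, ← Real.mul_rpow hx.le hc₀.le, div_mul_cancel₀ _ hc₀.ne']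
  have hS : 0 < K * (c₀ * c₀ ^ (-γ)) := by positivity
  have hmul := mul_lt_mul_of_pos_left (rpow_one_sub_div_sub_self_lt hγ hγ1 hx hx1) hS
  rw [hc_pow, hpow, hP]
  calc K * ((c / c₀) ^ (1 - γ) * (c₀ * c₀ ^ (-γ))) / (1 - γ) - c * (K * c₀ ^ (-γ))
      = K * (c₀ * c₀ ^ (-γ)) * ((c / c₀) ^ (1 - γ) / (1 - γ) - c / c₀) := by field_simp
    _ < K * (c₀ * c₀ ^ (-γ)) * (γ / (1 - γ)) := hmul
    _ = K * (c₀ * c₀ ^ (-γ)) / (1 - γ) - c₀ * (K * c₀ ^ (-γ)) := by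
      field_simp
      ring

/-- Completing the square in the mean-variance functional. -/
lemma dotProduct_sub_quadratic_eq {ι : Type*} [Fintype ι] [DecidableEq ι] {A : Matrix ι ι ℝ}
    (hA : A.PosDef) {γ : ℝ} (hγ : γ ≠ 0) (m y : ι → ℝ) :
    y ⬝ᵥ m - γ / 2 * (y ⬝ᵥ A.mulVec y) = 1 / (2 * γ) * (m ⬝ᵥ A⁻¹.mulVec m) -
      γ / 2 * ((y - (1 / γ) • A⁻¹.mulVec m) ⬝ᵥ A.mulVec (y - (1 / γ) • A⁻¹.mulVec m)) := by
  have hAinv : A.mulVec (A⁻¹.mulVec m) = m := by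
    rw [Matrix.mulVec_mulVec,
      Matrix.mul_nonsing_inv _ ((Matrix.isUnit_iff_isUnit_det A).1 hA.isUnit),
      Matrix.one_mulVec]
  have hsymm : A⁻¹.mulVec m ⬝ᵥ A.mulVec y = y ⬝ᵥ m := by
    have hT : Aᵀ = A := by simpa using hA.isHermitian.eq
    rw [Matrix.dotProduct_mulVec, ← Matrix.mulVec_transpose, hT, hAinv, dotProduct_comm]
  simp only [Matrix.mulVec_sub, Matrix.mulVec_smul, hAinv, sub_dotProduct, dotProduct_sub,
    smul_dotProduct, dotProduct_smul, smul_eq_mul, hsymm]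
  rw [dotProduct_comm (A⁻¹.mulVec m) m]
  field_simp
  ring

lemma dotProduct_eq_comp_of_support {ι κ : Type*} [Fintype ι] [Fintype κ] {e : ι → κ}
    (he : Function.Injective e) {x : κ → ℝ} (hx : ∀ k ∉ Set.range e, x k = 0) (y : κ → ℝ) :
    x ⬝ᵥ y = (x ∘ e) ⬝ᵥ (y ∘ e) :=
  (Fintype.sum_of_injective e he _ _ (fun k hk => by simp [hx k hk]) fun _ => rfl).symm

lemma quadratic_eq_submatrix_of_support {ι κ : Type*} [Fintype ι] [Fintype κ] {e : ι → κ}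
    (he : Function.Injective e) {x : κ → ℝ} (hx : ∀ k ∉ Set.range e, x k = 0)
    (A : Matrix κ κ ℝ) :
    x ⬝ᵥ A.mulVec x = (x ∘ e) ⬝ᵥ (A.submatrix e e).mulVec (x ∘ e) := by
  rw [dotProduct_eq_comp_of_support he hx]
  congr 1
  funext i
  simp only [Function.comp_apply, Matrix.mulVec]
  rw [dotProduct_comm, dotProduct_eq_comp_of_support he hx, dotProduct_comm]
  rfl

lemma rankEmb_injective {d n N : ℕ} (hn : 1 ≤ n) (hnN : n ≤ N) (hNd : N ≤ d) :
    Function.Injective (rankEmb d n N hn hnN hNd) := by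
  intro i j hij
  simp only [rankEmb, Fin.mk.injEq] at hij
  exact Fin.ext (by omega)

lemma mem_range_rankEmb_iff {d n N : ℕ} (hn : 1 ≤ n) (hnN : n ≤ N) (hNd : N ≤ d) (k : Fin d) :
    k ∈ Set.range (rankEmb d n N hn hnN hNd) ↔ n ≤ k.val + 1 ∧ k.val + 1 ≤ N := by
  constructor
  · rintro ⟨j, rfl⟩
    have := j.isLt
    simp only [rankEmb]
    omega
  · intro h
    exact ⟨⟨k.val + 1 - n, by omega⟩, Fin.ext (by simp only [rankEmb]; omega)⟩

lemma merton_factor_pos {γ β ν T t : ℝ} (hγ : 0 < γ) (ht : t ≤ T) :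
    0 < Real.exp ((ν / γ) * (T - t)) +
      (γ / (ν - β)) * Real.exp (-(ν / γ) * t) *
        (Real.exp (((ν - β) / γ) * T) - Real.exp (((ν - β) / γ) * t)) := by
  have hquot : 0 ≤ γ / (ν - β) *
      (Real.exp (((ν - β) / γ) * T) - Real.exp (((ν - β) / γ) * t)) := by
    rcases le_total 0 (ν - β) with h | h
    · refine mul_nonneg (div_nonneg hγ.le h) (sub_nonneg.2 (Real.exp_le_exp.2 ?_))
      exact mul_le_mul_of_nonneg_left ht (div_nonneg h hγ.le)
    · refine mul_nonneg_of_nonpos_of_nonpos (div_nonpos_of_nonneg_of_nonpos hγ.le h)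
        (sub_nonpos.2 (Real.exp_le_exp.2 ?_))
      exact mul_le_mul_of_nonpos_left ht (div_nonpos_of_nonpos_of_nonneg h hγ.le)
  have hmul := mul_nonneg (Real.exp_pos (-(ν / γ) * t)).le hquot
  have hexp := Real.exp_pos ((ν / γ) * (T - t))
  linarith

/-- The Merton factor solves the linear equation `∂ₜf = -(ν/γ) f - e^{-(β/γ)t}`. -/
lemma hasDerivAt_merton_factor {γ β ν T : ℝ} (hγ : γ ≠ 0) (hνβ : ν ≠ β) {f : ℝ → ℝ}
    (hf : ∀ t : ℝ, f t =
      Real.exp ((ν / γ) * (T - t)) +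
        (γ / (ν - β)) * Real.exp (-(ν / γ) * t) *
          (Real.exp (((ν - β) / γ) * T) - Real.exp (((ν - β) / γ) * t))) (t : ℝ) :
    HasDerivAt f (-(ν / γ) * f t - Real.exp (-(β / γ) * t)) t := by
  have hsub : ν - β ≠ 0 := sub_ne_zero.2 hνβ
  have hE₁ : HasDerivAt (fun s : ℝ => Real.exp ((ν / γ) * (T - s)))
      (Real.exp ((ν / γ) * (T - t)) * ((ν / γ) * (-1))) t :=
    (((hasDerivAt_id t).const_sub T).const_mul (ν / γ)).exp
  have hE (b : ℝ) : HasDerivAt (fun s : ℝ => Real.exp (b * s)) (Real.exp (b * t) * (b * 1)) t :=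
    ((hasDerivAt_id t).const_mul b).exp
  have hprod : Real.exp (-(β / γ) * t) =
      Real.exp (-(ν / γ) * t) * Real.exp (((ν - β) / γ) * t) := by
    rw [← Real.exp_add]
    congr 1
    ring
  rw [funext hf, hprod]
  convert! hE₁.add (((hE (-(ν / γ))).const_mul (γ / (ν - β))).mul
    ((hE ((ν - β) / γ)).const_sub (Real.exp (((ν - β) / γ) * T)))) using 1
  field_simp
  ring


/-- HJB under open market constraints in a first-order model.
With `μ̃_{[n:N]}`, `ã_{[n:N]}` the truncated drift vector and covariance matrix,
`ν_{[n:N]} = (1−γ)(r + (1/(2γ))(μ̃_{[n:N]}−r𝟙)ᵀ(ã_{[n:N]})⁻¹(μ̃_{[n:N]}−r𝟙)) ≠ β`, and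
`v(t,w) = f(t;ν_{[n:N]})^γ·w^(1−γ)/(1−γ)`, one has `v(T,w) = w^(1−γ)/(1−γ)` and, for
`(t,w) ∈ [0,T)×(0,∞)`, `0 = ∂ₜv + sup H(π,c)` where the supremum runs over `c ∈ (0,∞)`
and `π ∈ ℝ^d` with `π_k = 0` for ranks `k ∉ {n,…,N}`; it is attained at the unique
maximizer `π*` supported on ranks `n,…,N` given by the truncated Merton fraction
`(1/γ)(ã_{[n:N]})⁻¹(μ̃_{[n:N]}−r𝟙)`, together with `c* = e^{−(β/γ)t}·w/f(t;ν_{[n:N]})`. -/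
theorem stmt8 (γ β T : ℝ) (hγ : 0 < γ) (hγ1 : γ ≠ 1) (hβ : 0 < β) (hT : 0 < T)
    (d : ℕ) (hd : 1 ≤ d) (r : ℝ) (μ : Fin d → ℝ) (a : Matrix (Fin d) (Fin d) ℝ)
    (ha : a.PosDef)
    (n N : ℕ) (hn : 1 ≤ n) (hnN : n ≤ N) (hNd : N ≤ d)
    (aS : Matrix (Fin (N - n + 1)) (Fin (N - n + 1)) ℝ)
    (haS : aS = a.submatrix (rankEmb d n N hn hnN hNd) (rankEmb d n N hn hnN hNd))
    (μS : Fin (N - n + 1) → ℝ) (hμS : μS = μ ∘ rankEmb d n N hn hnN hNd)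
    (ν : ℝ)
    (hν : ν = (1 - γ) * (r + 1 / (2 * γ) *
      ((fun j => μS j - r) ⬝ᵥ aS⁻¹.mulVec (fun j => μS j - r))))
    (hνβ : ν ≠ β)
    (f : ℝ → ℝ)
    (hf : ∀ t : ℝ, f t =
      Real.exp ((ν / γ) * (T - t)) +
        (γ / (ν - β)) * Real.exp (-(ν / γ) * t) *
          (Real.exp (((ν - β) / γ) * T) - Real.exp (((ν - β) / γ) * t)))
    (v : ℝ → ℝ → ℝ)
    (hv : ∀ t w : ℝ, v t w = f t ^ γ * w ^ (1 - γ) / (1 - γ))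
    (H : ℝ → ℝ → (Fin d → ℝ) → ℝ → ℝ)
    (hH : ∀ t w : ℝ, ∀ π : Fin d → ℝ, ∀ c : ℝ, H t w π c =
      w * deriv (v t) w * (r + π ⬝ᵥ (fun i => μ i - r))
        + w ^ 2 / 2 * deriv (deriv (v t)) w * (π ⬝ᵥ a.mulVec π)
        - c * deriv (v t) w + Real.exp (-β * t) * c ^ (1 - γ) / (1 - γ))
    (πs : Fin d → ℝ)
    (hπs : πs = fun k : Fin d =>
      if h : n ≤ k.val + 1 ∧ k.val + 1 ≤ N then
        (1 / γ) * aS⁻¹.mulVec (fun j => μS j - r) ⟨k.val + 1 - n, by omega⟩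
      else 0)
    (cs : ℝ → ℝ → ℝ) (hcs : ∀ t w : ℝ, cs t w = Real.exp (-(β / γ) * t) * w / f t) :
    (∀ w : ℝ, 0 < w → v T w = w ^ (1 - γ) / (1 - γ)) ∧
    ∀ t ∈ Set.Ico 0 T, ∀ w : ℝ, 0 < w →
      (0 = deriv (fun s => v s w) t + H t w πs (cs t w)) ∧
      ((∀ k : Fin d, ¬(n ≤ k.val + 1 ∧ k.val + 1 ≤ N) → πs k = 0) ∧ 0 < cs t w) ∧
      (∀ π : Fin d → ℝ, (∀ k : Fin d, ¬(n ≤ k.val + 1 ∧ k.val + 1 ≤ N) → π k = 0) →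
        ∀ c : ℝ, 0 < c → H t w π c ≤ H t w πs (cs t w)) ∧
      (∀ π : Fin d → ℝ, (∀ k : Fin d, ¬(n ≤ k.val + 1 ∧ k.val + 1 ≤ N) → π k = 0) →
        ∀ c : ℝ, 0 < c →
          H t w π c = H t w πs (cs t w) → π = πs ∧ c = cs t w) := by
  have h1 : 1 - γ ≠ 0 := sub_ne_zero.2 hγ1.symm
  set e := rankEmb d n N hn hnN hNd with he
  have hinj : Function.Injective e := rankEmb_injective hn hnN hNd
  have hrange : ∀ k, k ∈ Set.range e ↔ n ≤ k.val + 1 ∧ k.val + 1 ≤ N :=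
    mem_range_rankEmb_iff hn hnN hNd
  set m : Fin (N - n + 1) → ℝ := fun j => μS j - r with hm
  have haSpos : aS.PosDef := haS ▸ ha.submatrix hinj
  have hπs_supp : ∀ k : Fin d, ¬(n ≤ k.val + 1 ∧ k.val + 1 ≤ N) → πs k = 0 := by
    intro k hk
    rw [hπs]
    exact dif_neg hk
  have hπs_comp : πs ∘ e = (1 / γ) • aS⁻¹.mulVec m := by
    funext j
    have hj : n ≤ (e j).val + 1 ∧ (e j).val + 1 ≤ N := (hrange _).1 ⟨j, rfl⟩
    have hidx : (e j).val + 1 - n = j.val := by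
      simp only [he, rankEmb]
      omega
    simp only [hπs, Function.comp_apply, dif_pos hj, hidx, Fin.eta, Pi.smul_apply, smul_eq_mul]
  -- the portfolio part of the Hamiltonian, with the square completed
  have hquad : ∀ π : Fin d → ℝ, (∀ k : Fin d, ¬(n ≤ k.val + 1 ∧ k.val + 1 ≤ N) → π k = 0) →
      r + π ⬝ᵥ (fun i => μ i - r) - γ / 2 * (π ⬝ᵥ a.mulVec π) =
        ν / (1 - γ) - γ / 2 * ((π ∘ e - πs ∘ e) ⬝ᵥ aS.mulVec (π ∘ e - πs ∘ e)) := by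
    intro π hπ
    have hsupp : ∀ k ∉ Set.range e, π k = 0 := fun k hk => hπ k (mt (hrange k).2 hk)
    have hsq := dotProduct_sub_quadratic_eq haSpos hγ.ne' m (π ∘ e)
    have hmμ : (fun i => μ i - r) ∘ e = m := by
      funext j
      simp [hm, hμS]
    rw [dotProduct_eq_comp_of_support hinj hsupp, quadratic_eq_submatrix_of_support hinj hsupp,
      hmμ, ← haS, hπs_comp, hν, mul_div_cancel_left₀ _ h1]
    linarith
  refine ⟨fun w _ => ?_, fun t ht w hw => ?_⟩
  · rw [hv, hf]
    simp
  have hft : 0 < f t := hf t ▸ merton_factor_pos hγ ht.2.le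
  have hcs_pos : 0 < cs t w := by
    rw [hcs]
    positivity
  have hvw : ∀ x : ℝ, 0 < x → HasDerivAt (v t) (f t ^ γ * x ^ (-γ)) x := by
    intro x hx
    rw [funext (hv t)]
    convert! ((Real.hasDerivAt_rpow_const (p := 1 - γ) (Or.inl hx.ne')).const_mul
      (f t ^ γ)).div_const (1 - γ) using 1
    rw [sub_sub_cancel_left]
    field_simp
  have hvww : HasDerivAt (deriv (v t)) (f t ^ γ * (-γ * w ^ (-γ - 1))) w := by
    refine ((Real.hasDerivAt_rpow_const (p := -γ) (Or.inl hw.ne')).const_mul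
      (f t ^ γ)).congr_of_eventuallyEq ?_
    filter_upwards [lt_mem_nhds hw] with x hx
    exact (hvw x hx).deriv
  have hvt : HasDerivAt (fun s => v s w)
      ((-(ν / γ) * f t - Real.exp (-(β / γ) * t)) * γ * f t ^ (γ - 1) * w ^ (1 - γ) / (1 - γ))
      t := by
    rw [funext fun s => hv s w]
    exact (((hasDerivAt_merton_factor hγ.ne' hνβ hf t).rpow_const
      (Or.inl hft.ne')).mul_const _).div_const _
  set P : ℝ := f t ^ γ * w ^ (-γ) with hP
  set K : ℝ := Real.exp (-β * t) with hK
  have hKpos : 0 < K := Real.exp_pos _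
  have hPpos : 0 < P := by positivity
  have hcrit : P = K * cs t w ^ (-γ) := by
    rw [hcs, Real.div_rpow (by positivity) hft.le, Real.mul_rpow (Real.exp_pos _).le hw.le,
      ← Real.exp_mul, Real.rpow_neg hft.le, div_inv_eq_mul, hP, hK]
    have : Real.exp (-β * t) * Real.exp (-(β / γ) * t * -γ) = 1 := by
      rw [← Real.exp_add, Real.exp_eq_one_iff]
      field_simp
      ring
    linear_combination (-(f t ^ γ * w ^ (-γ))) * this
  have hHam : ∀ π : Fin d → ℝ, (∀ k : Fin d, ¬(n ≤ k.val + 1 ∧ k.val + 1 ≤ N) → π k = 0) →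
      ∀ c : ℝ, H t w π c = w * P * (ν / (1 - γ) -
        γ / 2 * ((π ∘ e - πs ∘ e) ⬝ᵥ aS.mulVec (π ∘ e - πs ∘ e))) +
          (K * c ^ (1 - γ) / (1 - γ) - c * P) := by
    intro π hπ c
    have hpow : w ^ (-γ - 1) = w ^ (-γ) / w := Real.rpow_sub_one hw.ne' _
    rw [hH, (hvw w hw).deriv, hvww.deriv, ← hquad π hπ, hpow, ← hP]
    have : w ^ 2 / 2 * (f t ^ γ * (-γ * (w ^ (-γ) / w))) = -(γ / 2) * (w * P) := by
      rw [hP]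
      field_simp
    rw [this]
    ring
  have hHam_star : H t w πs (cs t w) = w * P * (ν / (1 - γ)) +
      (K * cs t w ^ (1 - γ) / (1 - γ) - cs t w * P) := by
    rw [hHam πs hπs_supp]
    simp
  have hlt : ∀ π : Fin d → ℝ, (∀ k : Fin d, ¬(n ≤ k.val + 1 ∧ k.val + 1 ≤ N) → π k = 0) →
      ∀ c : ℝ, 0 < c → ¬(π = πs ∧ c = cs t w) → H t w π c < H t w πs (cs t w) := by
    intro π hπ c hc hne
    rw [hHam π hπ, hHam_star]
    have hwP : 0 < w * P := mul_pos hw hPpos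
    have hnonneg : 0 ≤ (π ∘ e - πs ∘ e) ⬝ᵥ aS.mulVec (π ∘ e - πs ∘ e) := by
      simpa using haSpos.posSemidef.dotProduct_mulVec_nonneg (π ∘ e - πs ∘ e)
    by_cases hcc : c = cs t w
    · have hdiff : π ∘ e - πs ∘ e ≠ 0 := by
        intro h0
        refine hne ⟨funext fun k => ?_, hcc⟩
        by_cases hk : n ≤ k.val + 1 ∧ k.val + 1 ≤ N
        · obtain ⟨j, rfl⟩ := (hrange k).2 hk
          exact congrFun (sub_eq_zero.1 h0) j
        · rw [hπ k hk, hπs_supp k hk]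
      have hpos : 0 < (π ∘ e - πs ∘ e) ⬝ᵥ aS.mulVec (π ∘ e - πs ∘ e) := by
        simpa using haSpos.dotProduct_mulVec_pos hdiff
      rw [hcc]
      have := mul_pos hwP (mul_pos (half_pos hγ) hpos)
      linarith
    · have hcons := power_utility_sub_linear_lt hγ hγ1 hKpos hcs_pos hc hcrit hcc
      have := mul_nonneg hwP.le (mul_nonneg (half_pos hγ).le hnonneg)
      linarith
  refine ⟨?_, ⟨hπs_supp, hcs_pos⟩, fun π hπ c hc => ?_, fun π hπ c hc h => ?_⟩
  · have hcpow : K * cs t w ^ (1 - γ) = cs t w * P := by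
      rw [hcrit, sub_eq_add_neg, Real.rpow_add hcs_pos, Real.rpow_one]
      ring
    have hwpow : w ^ (1 - γ) = w * w ^ (-γ) := by
      rw [sub_eq_add_neg, Real.rpow_add hw, Real.rpow_one]
    rw [hvt.deriv, hHam_star, hcpow, hcs, hP, Real.rpow_sub_one hft.ne', hwpow]
    field_simp
    ring
  · by_cases hπc : π = πs ∧ c = cs t w
    · rw [hπc.1, hπc.2]
    · exact (hlt π hπ c hc hπc).le
  · by_contra hπc
    exact (hlt π hπ c hc hπc).ne h
end

section
/- Let 1 ≤ n ≤ N ≤ d, write μ̃_{[n:N]} = (μ̃_k)_{n≤k≤N} ∈ ℝ^{N−n+1}, ã_{[n:N]} = (ã_{kℓ})_{n≤k,ℓ≤N}, let 1 be the all-ones vector in ℝ^{N−n+1}, set λ' = (γ − 1^⊤(ã_{[n:N]})^{−1}μ̃_{[n:N]})/(1^⊤(ã_{[n:N]})^{−1}1) and ζ = ((1−γ)/(2γ))·(μ̃_{[n:N]} − λ'·1)^⊤(ã_{[n:N]})^{−1}(μ̃_{[n:N]} + λ'·1); assume ζ ≠ β. Define v(t,w) = f(t;ζ)^γ · w^{1−γ}/(1−γ)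 on [0,T]×(0,∞). Then v(T,w) = w^{1−γ}/(1−γ) for all w > 0, and for every (t,w) ∈ [0,T)×(0,∞): 0 = ∂_t v(t,w) + sup over (π,c) with π ∈ ℝ^d satisfying π_k = 0 for all k ∉ {n,…,N} and π_1 + … + π_d = 1, and c ∈ (0,∞), of [ w·∂_w v(t,w)·(r + π^⊤(μ̃ − r·1_d)) + (w²/2)·∂_{ww}v(t,w)·π^⊤ã π − c·∂_w v(t,w) + e^{−βt}·c^{1−γ}/(1−γ) ]. Moreover this supremum is attained at the unique maximizer π* with (π*)_k = η*_{k−n+1} for n ≤ k ≤ N and (π*)_k = 0 otherwise, where η* = (1/γ)·(ã_{[n:N]})^{−1}(μ̃_{[n:N]} + λ'·1), together with c* = e^{−(β/γ)t}·w/f(t;ζ). -/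
open Matrix

/-- Strict tangent-line inequality at `1` for the power utility of exponent `p < 1`. -/
lemma rpow_div_lt_of_ne_one {p x : ℝ} (hp0 : p ≠ 0) (hp1 : p < 1) (hx : 0 < x) (hx1 : x ≠ 1) :
    x ^ p / p < 1 / p + (x - 1) := by
  rcases lt_or_gt_of_ne hp0 with hp | hp
  · have hlog : Real.log x < x - 1 := Real.log_lt_sub_one_of_pos hx hx1
    have hexp : Real.log x * p + 1 ≤ x ^ p := by
      rw [Real.rpow_def_of_pos hx]; exact Real.add_one_le_exp _
    have h : 1 + (x - 1) * p < x ^ p := by nlinarith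
    rw [div_lt_iff_of_neg hp, add_mul, one_div_mul_cancel hp0]
    exact h
  · have h := rpow_one_add_lt_one_add_mul_self (s := x - 1) (by linarith)
      (sub_ne_zero.mpr hx1) hp hp1
    rw [add_sub_cancel] at h
    rw [div_lt_iff₀ hp, add_mul, one_div_mul_cancel hp0]
    linarith

/-- Power utility of consumption less its cost, at the marginal price of `c₀`, is strictly
maximized at `c₀`. -/
lemma consumption_lt {γ K c c₀ : ℝ} (hγ : 0 < γ) (hγ1 : γ ≠ 1) (hK : 0 < K) (hc₀ : 0 < c₀)
    (hc : 0 < c) (hne : c ≠ c₀) :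
    -(c * (K * c₀ ^ (-γ))) + K * c ^ (1 - γ) / (1 - γ) <
      -(c₀ * (K * c₀ ^ (-γ))) + K * c₀ ^ (1 - γ) / (1 - γ) := by
  have h := rpow_div_lt_of_ne_one (p := 1 - γ) (x := c / c₀) (sub_ne_zero.mpr hγ1.symm)
    (by linarith) (div_pos hc hc₀) (by rwa [Ne, div_eq_one_iff_eq hc₀.ne'])
  rw [Real.div_rpow hc.le hc₀.le] at h
  have hpow : c₀ ^ (1 - γ) = c₀ * c₀ ^ (-γ) := by
    rw [sub_eq_add_neg, Real.rpow_add hc₀, Real.rpow_one]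
  have hpos : 0 < c₀ ^ (1 - γ) := Real.rpow_pos_of_pos hc₀ _
  have h1 := mul_lt_mul_of_pos_left h (mul_pos hK hpos)
  have h2 : K * c₀ ^ (1 - γ) * (c ^ (1 - γ) / c₀ ^ (1 - γ) / (1 - γ)) =
      K * c ^ (1 - γ) / (1 - γ) := by
    field_simp
  have h3 : K * c₀ ^ (1 - γ) * (1 / (1 - γ) + (c / c₀ - 1)) =
      K * c₀ ^ (1 - γ) / (1 - γ) + c * (K * c₀ ^ (-γ)) - c₀ * (K * c₀ ^ (-γ)) := by
    have h4 : c₀ ^ (1 - γ) * (c / c₀) = c * c₀ ^ (-γ) := by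
      rw [hpow]; field_simp
    linear_combination K * h4 - K * hpow
  rw [h2, h3] at h1
  linarith

/-- Completing the square around a critical point of a quadratic functional. -/
lemma quadratic_eq_sub_of_critical {ι : Type*} [Fintype ι] {a : Matrix ι ι ℝ} (ha : aᵀ = a)
    {γ : ℝ} {μ x y : ι → ℝ} (h : (y - x) ⬝ᵥ μ = γ * ((y - x) ⬝ᵥ a *ᵥ x)) :
    y ⬝ᵥ μ - γ / 2 * (y ⬝ᵥ a *ᵥ y) =
      x ⬝ᵥ μ - γ / 2 * (x ⬝ᵥ a *ᵥ x) - γ / 2 * ((y - x) ⬝ᵥ a *ᵥ (y - x)) := by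
  have hs : x ⬝ᵥ a *ᵥ y = y ⬝ᵥ a *ᵥ x := by
    rw [dotProduct_mulVec, ← mulVec_transpose, ha, dotProduct_comm]
  simp only [mulVec_sub, sub_dotProduct, dotProduct_sub] at h ⊢
  linear_combination h - γ / 2 * hs

/-- A dot product with a vector supported on the range of an injection. -/
lemma dotProduct_eq_of_support {ι κ : Type*} [Fintype ι] [Fintype κ] {e : κ → ι}
    (he : Function.Injective e) {x : ι → ℝ} (hx : ∀ i ∉ Set.range e, x i = 0) (g : ι → ℝ) :
    x ⬝ᵥ g = (x ∘ e) ⬝ᵥ (g ∘ e) :=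
  (Fintype.sum_of_injective e he _ _ (fun i hi => by simp [hx i hi]) fun _ => rfl).symm

lemma mem_range_rankEmb {d n N : ℕ} (hn : 1 ≤ n) (hnN : n ≤ N) (hNd : N ≤ d) {k : Fin d} :
    k ∈ Set.range (rankEmb d n N hn hnN hNd) ↔ n ≤ k.val + 1 ∧ k.val + 1 ≤ N := by
  constructor
  · rintro ⟨j, rfl⟩
    have := j.isLt
    simp only [rankEmb]
    omega
  · intro h
    exact ⟨⟨k.val + 1 - n, by omega⟩, Fin.ext (by simp only [rankEmb]; omega)⟩

/-- With the Lagrange multiplier `lam`, the coordinates of the constrained optimum sum to one. -/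
lemma one_dotProduct_optimum {κ : Type*} [Fintype κ] [DecidableEq κ] [Nonempty κ]
    {A : Matrix κ κ ℝ} (hA : A.PosDef) {γ lam : ℝ} (hγ : 0 < γ) {m : κ → ℝ}
    (hlam : lam = (γ - (fun _ => (1 : ℝ)) ⬝ᵥ A⁻¹ *ᵥ m) /
      ((fun _ => (1 : ℝ)) ⬝ᵥ A⁻¹ *ᵥ (fun _ => (1 : ℝ)))) :
    (fun _ => (1 : ℝ)) ⬝ᵥ ((1 / γ) • A⁻¹ *ᵥ (fun j => m j + lam)) = 1 := by
  have hone : (fun _ => (1 : ℝ) : κ → ℝ) ≠ 0 := fun h =>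
    one_ne_zero (congrFun h (Classical.arbitrary κ))
  have hpos : 0 < (fun _ => (1 : ℝ)) ⬝ᵥ A⁻¹ *ᵥ (fun _ => (1 : ℝ)) := by
    have := hA.inv.dotProduct_mulVec_pos hone
    simpa only [star_trivial] using this
  have hsplit : (fun j => m j + lam) = m + lam • (fun _ => (1 : ℝ)) := by
    ext j; simp
  rw [hsplit, mulVec_add, mulVec_smul, dotProduct_smul, dotProduct_add, dotProduct_smul,
    smul_eq_mul, smul_eq_mul, hlam, div_mul_cancel₀ _ hpos.ne']
  field_simp
  ring

/-- The time factor of the value function solves a linear first-order equation. -/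
lemma hasDerivAt_timeFactor {γ β T ζ : ℝ} (hγ : γ ≠ 0) (hζβ : ζ ≠ β) {f : ℝ → ℝ}
    (hf : ∀ t : ℝ, f t =
      Real.exp ((ζ / γ) * (T - t)) +
        (γ / (ζ - β)) * Real.exp (-(ζ / γ) * t) *
          (Real.exp (((ζ - β) / γ) * T) - Real.exp (((ζ - β) / γ) * t))) (t : ℝ) :
    HasDerivAt f (-(ζ / γ) * f t - Real.exp (-(β / γ) * t)) t := by
  have h1 : HasDerivAt (fun s => Real.exp ((ζ / γ) * (T - s)))
      (Real.exp ((ζ / γ) * (T - t)) * ((ζ / γ) * (-1))) t :=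
    (((hasDerivAt_id t).const_sub T).const_mul _).exp
  have h2 : HasDerivAt (fun s => Real.exp (-(ζ / γ) * s))
      (Real.exp (-(ζ / γ) * t) * (-(ζ / γ) * 1)) t :=
    ((hasDerivAt_id t).const_mul _).exp
  have h3 : HasDerivAt (fun s => Real.exp (((ζ - β) / γ) * s))
      (Real.exp (((ζ - β) / γ) * t) * (((ζ - β) / γ) * 1)) t :=
    ((hasDerivAt_id t).const_mul _).exp
  have h := h1.add ((h2.const_mul (γ / (ζ - β))).mul
    (h3.const_sub (Real.exp (((ζ - β) / γ) * T))))
  have hfe : f = (fun s => Real.exp ((ζ / γ) * (T - s))) +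
      (fun s => (γ / (ζ - β)) * Real.exp (-(ζ / γ) * s)) *
        (fun s => Real.exp (((ζ - β) / γ) * T) - Real.exp (((ζ - β) / γ) * s)) :=
    funext hf
  rw [← hfe] at h
  refine h.congr_deriv ?_
  have he : Real.exp (-(β / γ) * t) =
      Real.exp (-(ζ / γ) * t) * Real.exp (((ζ - β) / γ) * t) := by
    rw [← Real.exp_add]; congr 1; ring
  have hc : γ / (ζ - β) * ((ζ - β) / γ) = 1 := by
    have := sub_ne_zero.mpr hζβ
    field_simp
  rw [he, hf t]
  linear_combination
    (-Real.exp (-(ζ / γ) * t) * Real.exp (((ζ - β) / γ) * t)) * hc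

/-- The time factor is positive up to the horizon. -/
lemma timeFactor_pos {γ β T ζ t : ℝ} (hγ : 0 < γ) (hζβ : ζ ≠ β) (ht : t ≤ T) :
    0 < Real.exp ((ζ / γ) * (T - t)) +
        (γ / (ζ - β)) * Real.exp (-(ζ / γ) * t) *
          (Real.exp (((ζ - β) / γ) * T) - Real.exp (((ζ - β) / γ) * t)) := by
  refine add_pos_of_pos_of_nonneg (Real.exp_pos _) ?_
  rw [mul_right_comm]
  refine mul_nonneg ?_ (Real.exp_pos _).le
  rcases lt_or_gt_of_ne hζβ with h | h
  · refine mul_nonneg_of_nonpos_of_nonpos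
      (div_nonpos_of_nonneg_of_nonpos hγ.le (by linarith)) ?_
    exact sub_nonpos.mpr (Real.exp_le_exp.mpr (mul_le_mul_of_nonpos_left ht
      (div_nonpos_of_nonpos_of_nonneg (by linarith) hγ.le)))
  · refine mul_nonneg (div_nonneg hγ.le (by linarith)) ?_
    exact sub_nonneg.mpr (Real.exp_le_exp.mpr (mul_le_mul_of_nonneg_left ht
      (div_nonneg (by linarith) hγ.le)))

lemma hasDerivAt_powerUtility {γ A w : ℝ} (hγ1 : γ ≠ 1) (hw : 0 < w) :
    HasDerivAt (fun x : ℝ => A * x ^ (1 - γ) / (1 - γ)) (A * w ^ (-γ)) w := by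
  have h := ((Real.hasDerivAt_rpow_const (p := 1 - γ) (Or.inl hw.ne')).const_mul A).div_const
    (1 - γ)
  refine h.congr_deriv ?_
  have : 1 - γ ≠ 0 := sub_ne_zero.mpr hγ1.symm
  rw [show 1 - γ - 1 = -γ by ring]
  field_simp

lemma deriv_deriv_powerUtility {γ A w : ℝ} (hγ1 : γ ≠ 1) (hw : 0 < w) :
    deriv (deriv (fun x : ℝ => A * x ^ (1 - γ) / (1 - γ))) w = -(γ * (A * w ^ (-γ - 1))) := by
  have h : deriv (fun x : ℝ => A * x ^ (1 - γ) / (1 - γ)) =ᶠ[nhds w]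
      fun x => A * x ^ (-γ) := by
    filter_upwards [lt_mem_nhds hw] with x hx
    exact (hasDerivAt_powerUtility hγ1 hx).deriv
  rw [h.deriv_eq,
    ((Real.hasDerivAt_rpow_const (p := -γ) (Or.inl hw.ne')).const_mul A).deriv]
  ring

/-- HJB under combined open market and fully invested constraints.
With `λ' = (γ − 𝟙ᵀ(ã_{[n:N]})⁻¹μ̃_{[n:N]})/(𝟙ᵀ(ã_{[n:N]})⁻¹𝟙)`,
`ζ = ((1−γ)/(2γ))(μ̃_{[n:N]}−λ'𝟙)ᵀ(ã_{[n:N]})⁻¹(μ̃_{[n:N]}+λ'𝟙) ≠ β` and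
`v(t,w) = f(t;ζ)^γ·w^(1−γ)/(1−γ)`, one has `v(T,w) = w^(1−γ)/(1−γ)` and, for
`(t,w) ∈ [0,T)×(0,∞)`, `0 = ∂ₜv + sup H(π,c)` where the supremum runs over `c ∈ (0,∞)`
and `π ∈ ℝ^d` with `π_k = 0` for ranks `k ∉ {n,…,N}` and `π₁+⋯+π_d = 1`; it is attained
at the unique maximizer `π*` supported on ranks `n,…,N` given there by
`η* = (1/γ)(ã_{[n:N]})⁻¹(μ̃_{[n:N]}+λ'𝟙)`, together with `c* = e^{−(β/γ)t}·w/f(t;ζ)`. -/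
theorem stmt9 (γ β T : ℝ) (hγ : 0 < γ) (hγ1 : γ ≠ 1) (hβ : 0 < β) (hT : 0 < T)
    (d : ℕ) (hd : 1 ≤ d) (r : ℝ) (μ : Fin d → ℝ) (a : Matrix (Fin d) (Fin d) ℝ)
    (ha : a.PosDef)
    (n N : ℕ) (hn : 1 ≤ n) (hnN : n ≤ N) (hNd : N ≤ d)
    (aS : Matrix (Fin (N - n + 1)) (Fin (N - n + 1)) ℝ)
    (haS : aS = a.submatrix (rankEmb d n N hn hnN hNd) (rankEmb d n N hn hnN hNd))
    (μS : Fin (N - n + 1) → ℝ) (hμS : μS = μ ∘ rankEmb d n N hn hnN hNd)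
    (lam : ℝ)
    (hlam : lam = (γ - (fun _ => (1 : ℝ)) ⬝ᵥ aS⁻¹.mulVec μS) /
      ((fun _ => (1 : ℝ)) ⬝ᵥ aS⁻¹.mulVec (fun _ => (1 : ℝ))))
    (ζ : ℝ)
    (hζ : ζ = (1 - γ) / (2 * γ) *
      ((fun j => μS j - lam) ⬝ᵥ aS⁻¹.mulVec (fun j => μS j + lam)))
    (hζβ : ζ ≠ β)
    (f : ℝ → ℝ)
    (hf : ∀ t : ℝ, f t =
      Real.exp ((ζ / γ) * (T - t)) +
        (γ / (ζ - β)) * Real.exp (-(ζ / γ) * t) *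
          (Real.exp (((ζ - β) / γ) * T) - Real.exp (((ζ - β) / γ) * t)))
    (v : ℝ → ℝ → ℝ)
    (hv : ∀ t w : ℝ, v t w = f t ^ γ * w ^ (1 - γ) / (1 - γ))
    (H : ℝ → ℝ → (Fin d → ℝ) → ℝ → ℝ)
    (hH : ∀ t w : ℝ, ∀ π : Fin d → ℝ, ∀ c : ℝ, H t w π c =
      w * deriv (v t) w * (r + π ⬝ᵥ (fun i => μ i - r))
        + w ^ 2 / 2 * deriv (deriv (v t)) w * (π ⬝ᵥ a.mulVec π)
        - c * deriv (v t) w + Real.exp (-β * t) * c ^ (1 - γ) / (1 - γ))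
    (ηs : Fin (N - n + 1) → ℝ)
    (hηs : ηs = (1 / γ) • aS⁻¹.mulVec (fun j => μS j + lam))
    (πs : Fin d → ℝ)
    (hπs : πs = fun k : Fin d =>
      if h : n ≤ k.val + 1 ∧ k.val + 1 ≤ N then ηs ⟨k.val + 1 - n, by omega⟩ else 0)
    (cs : ℝ → ℝ → ℝ) (hcs : ∀ t w : ℝ, cs t w = Real.exp (-(β / γ) * t) * w / f t) :
    (∀ w : ℝ, 0 < w → v T w = w ^ (1 - γ) / (1 - γ)) ∧
    ∀ t ∈ Set.Ico 0 T, ∀ w : ℝ, 0 < w →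
      (0 = deriv (fun s => v s w) t + H t w πs (cs t w)) ∧
      ((∀ k : Fin d, ¬(n ≤ k.val + 1 ∧ k.val + 1 ≤ N) → πs k = 0) ∧
        (∑ k, πs k) = 1 ∧ 0 < cs t w) ∧
      (∀ π : Fin d → ℝ, (∀ k : Fin d, ¬(n ≤ k.val + 1 ∧ k.val + 1 ≤ N) → π k = 0) →
        (∑ k, π k) = 1 → ∀ c : ℝ, 0 < c → H t w π c ≤ H t w πs (cs t w)) ∧
      (∀ π : Fin d → ℝ, (∀ k : Fin d, ¬(n ≤ k.val + 1 ∧ k.val + 1 ≤ N) → π k = 0) →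
        (∑ k, π k) = 1 → ∀ c : ℝ, 0 < c →
          H t w π c = H t w πs (cs t w) → π = πs ∧ c = cs t w) := by
  have hmem : ∀ {k : Fin d}, k ∈ Set.range (rankEmb d n N hn hnN hNd) ↔
      n ≤ k.val + 1 ∧ k.val + 1 ≤ N := mem_range_rankEmb hn hnN hNd
  have hinj := rankEmb_injective hn hnN hNd
  set e := rankEmb d n N hn hnN hNd with he
  have hg1 : 1 - γ ≠ 0 := sub_ne_zero.mpr hγ1.symm
  have hsupp : ∀ k : Fin d, ¬(n ≤ k.val + 1 ∧ k.val + 1 ≤ N) → πs k = 0 := by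
    intro k hk
    rw [hπs]
    exact dif_neg hk
  have hπe : πs ∘ e = ηs := by
    funext j
    have hj := hmem.mp ⟨j, rfl⟩
    rw [hπs, Function.comp_apply, dif_pos hj]
    congr 1
    apply Fin.ext
    simp only [he, rankEmb]
    omega
  have hdot : ∀ π : Fin d → ℝ, (∀ k : Fin d, ¬(n ≤ k.val + 1 ∧ k.val + 1 ≤ N) → π k = 0) →
      ∀ g : Fin d → ℝ, π ⬝ᵥ g = (π ∘ e) ⬝ᵥ (g ∘ e) := fun π hπ g =>
    dotProduct_eq_of_support hinj (fun i hi => hπ i (fun h => hi (hmem.mpr h))) g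
  have hAS : aS.PosDef := haS ▸ ha.submatrix hinj
  have hsum : ∑ k, πs k = 1 := by
    have h := hdot πs hsupp (fun _ => 1)
    have h1 := one_dotProduct_optimum hAS hγ hlam
    rw [← hηs, dotProduct_comm] at h1
    rw [hπe] at h
    simpa [dotProduct] using h.trans h1
  -- first-order condition on the admissible coordinates
  have hcrit : (a *ᵥ πs) ∘ e = (1 / γ) • fun j => μS j + lam := by
    have h1 : (a *ᵥ πs) ∘ e = aS *ᵥ ηs := by
      funext j
      have h2 := hdot πs hsupp (a (e j))
      rw [hπe, dotProduct_comm, dotProduct_comm ηs] at h2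
      rw [haS]
      exact h2
    rw [h1, hηs, mulVec_smul, mulVec_mulVec,
      mul_nonsing_inv _ ((isUnit_iff_isUnit_det _).mp hAS.isUnit), one_mulVec]
  have hcritdot : ∀ π : Fin d → ℝ,
      (∀ k : Fin d, ¬(n ≤ k.val + 1 ∧ k.val + 1 ≤ N) → π k = 0) → ∑ k, π k = 1 →
      π ⬝ᵥ μ = γ * (π ⬝ᵥ a *ᵥ πs) - lam := by
    intro π hπ hs
    have h1 := hdot π hπ (a *ᵥ πs)
    have h2 := hdot π hπ (fun k => μ k + lam)
    have h3 : π ⬝ᵥ (fun k => μ k + lam) = π ⬝ᵥ μ + lam := by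
      simp only [dotProduct, mul_add, Finset.sum_add_distrib, ← Finset.sum_mul, hs, one_mul]
    rw [hcrit, dotProduct_smul, smul_eq_mul, hμS] at h1
    rw [h3] at h2
    change _ = (π ∘ e) ⬝ᵥ (fun j => (μ ∘ e) j + lam) at h2
    rw [← h2] at h1
    rw [h1]
    field_simp
    ring
  have hsymm : aᵀ = a := by
    have := ha.isHermitian.eq
    rwa [conjTranspose_eq_transpose_of_trivial] at this
  have hquad : ∀ π : Fin d → ℝ,
      (∀ k : Fin d, ¬(n ≤ k.val + 1 ∧ k.val + 1 ≤ N) → π k = 0) → ∑ k, π k = 1 →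
      π ⬝ᵥ μ - γ / 2 * (π ⬝ᵥ a *ᵥ π) = πs ⬝ᵥ μ - γ / 2 * (πs ⬝ᵥ a *ᵥ πs)
        - γ / 2 * ((π - πs) ⬝ᵥ a *ᵥ (π - πs)) := by
    intro π hπ hs
    apply quadratic_eq_sub_of_critical hsymm
    rw [sub_dotProduct, sub_dotProduct, hcritdot π hπ hs, hcritdot πs hsupp hsum]
    ring
  have hopt : (1 - γ) * (πs ⬝ᵥ μ - γ / 2 * (πs ⬝ᵥ a *ᵥ πs)) = ζ := by
    have h1 := hcritdot πs hsupp hsum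
    have h2 := hdot πs hsupp (fun k => μ k - lam)
    have h3 : πs ⬝ᵥ (fun k => μ k - lam) = πs ⬝ᵥ μ - lam := by
      simp only [dotProduct, mul_sub, Finset.sum_sub_distrib, ← Finset.sum_mul, hsum, one_mul]
    rw [h3, hπe, hηs, smul_dotProduct, smul_eq_mul, dotProduct_comm (aS⁻¹ *ᵥ _)] at h2
    have h4 : (fun k => μ k - lam) ∘ e = fun j => μS j - lam := by
      rw [hμS]; rfl
    rw [h4] at h2
    have h5 : ζ = (1 - γ) / 2 * (πs ⬝ᵥ μ - lam) := by
      rw [h2, hζ]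
      field_simp
    rw [h5]
    linear_combination (1 - γ) / 2 * h1
  refine ⟨fun w hw => ?_, fun t ht w hw => ?_⟩
  · rw [hv, hf]
    simp
  have hft : 0 < f t := by
    rw [hf]; exact timeFactor_pos hγ hζβ ht.2.le
  have hc₀ : 0 < cs t w := by
    rw [hcs]; positivity
  have hvt : v t = fun x => f t ^ γ * x ^ (1 - γ) / (1 - γ) := funext (hv t)
  have hprice : f t ^ γ * w ^ (-γ) = Real.exp (-β * t) * cs t w ^ (-γ) := by
    rw [hcs, Real.div_rpow (by positivity) hft.le, Real.mul_rpow (Real.exp_pos _).le hw.le,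
      ← Real.exp_mul, Real.rpow_neg hft.le γ, show -(β / γ) * t * -γ = β * t by field_simp,
      neg_mul, Real.exp_neg]
    field_simp
  have hww : w * w ^ (-γ) = w ^ (1 - γ) := by
    rw [sub_eq_add_neg, Real.rpow_add hw, Real.rpow_one]
  have hww2 : w ^ 2 * w ^ (-γ - 1) = w ^ (1 - γ) := by
    rw [← Real.rpow_natCast, ← Real.rpow_add hw]
    congr 1
    push_cast
    ring
  have hHt : ∀ π : Fin d → ℝ, ∑ k, π k = 1 → ∀ c : ℝ, H t w π c =
      f t ^ γ * w ^ (1 - γ) * (π ⬝ᵥ μ - γ / 2 * (π ⬝ᵥ a *ᵥ π)) +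
        (-(c * (Real.exp (-β * t) * cs t w ^ (-γ))) +
          Real.exp (-β * t) * c ^ (1 - γ) / (1 - γ)) := by
    intro π hs c
    have h1 : π ⬝ᵥ (fun i => μ i - r) = π ⬝ᵥ μ - r := by
      simp only [dotProduct, mul_sub, Finset.sum_sub_distrib, ← Finset.sum_mul, hs, one_mul]
    rw [hH, h1, hvt, (hasDerivAt_powerUtility hγ1 hw).deriv, deriv_deriv_powerUtility hγ1 hw,
      ← hprice]
    linear_combination f t ^ γ * (π ⬝ᵥ μ) * hww - f t ^ γ * γ / 2 * (π ⬝ᵥ a *ᵥ π) * hww2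
  have hF : 0 < f t ^ γ * w ^ (1 - γ) := by positivity
  have hpsd : ∀ x : Fin d → ℝ, 0 ≤ x ⬝ᵥ a *ᵥ x := fun x => by
    simpa only [star_trivial] using ha.posSemidef.dotProduct_mulVec_nonneg x
  have hcons : ∀ c : ℝ, 0 < c → c ≠ cs t w → _ := fun c hc hne =>
    consumption_lt hγ hγ1 (Real.exp_pos (-β * t)) hc₀ hc hne
  refine ⟨?_, ⟨hsupp, hsum, hc₀⟩, ?_, ?_⟩
  · have hd := (((hasDerivAt_timeFactor hγ.ne' hζβ hf t).rpow_const (p := γ)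
      (Or.inl hft.ne')).mul_const (w ^ (1 - γ))).div_const (1 - γ)
    have hfun : (fun s => v s w) = fun s => f s ^ γ * w ^ (1 - γ) / (1 - γ) :=
      funext fun s => hv s w
    have hcp : Real.exp (-β * t) * cs t w ^ (1 - γ) =
        cs t w * (Real.exp (-β * t) * cs t w ^ (-γ)) := by
      rw [sub_eq_add_neg, Real.rpow_add hc₀, Real.rpow_one]
      ring
    have hfp : f t ^ γ = f t ^ (γ - 1) * f t := by
      rw [Real.rpow_sub_one hft.ne']
      field_simp
    have hcost : cs t w * (Real.exp (-β * t) * cs t w ^ (-γ)) =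
        Real.exp (-(β / γ) * t) * (f t ^ (γ - 1) * w ^ (1 - γ)) := by
      rw [← hprice, hcs, hfp, ← hww]
      field_simp
    have hopt' : πs ⬝ᵥ μ - γ / 2 * (πs ⬝ᵥ a *ᵥ πs) = ζ / (1 - γ) := by
      rw [← hopt]; field_simp
    rw [hfun, hd.deriv, hHt πs hsum, hcp, hcost, hopt', hfp]
    field_simp
    ring
  · intro π hπ hs c hc
    rw [hHt π hs, hHt πs hsum, hquad π hπ hs]
    refine add_le_add (mul_le_mul_of_nonneg_left ?_ hF.le) ?_
    · have := mul_nonneg (half_pos hγ).le (hpsd (π - πs))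
      linarith
    · rcases eq_or_ne c (cs t w) with rfl | hne
      · exact le_rfl
      · exact (hcons c hc hne).le
  · intro π hπ hs c hc heq
    rw [hHt π hs, hHt πs hsum, hquad π hπ hs] at heq
    have hq := mul_nonneg hF.le (mul_nonneg (half_pos hγ).le (hpsd (π - πs)))
    have hceq : c = cs t w := by
      by_contra hne
      have := hcons c hc hne
      linarith
    refine ⟨?_, hceq⟩
    by_contra hne
    have hpos : 0 < (π - πs) ⬝ᵥ a *ᵥ (π - πs) := by
      simpa only [star_trivial] using ha.dotProduct_mulVec_pos (sub_ne_zero.mpr hne)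
    have := mul_pos hF (mul_pos (half_pos hγ) hpos)
    rw [hceq] at heq
    linarith
end
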